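/- Assume the setup below. Then ∫₀¹ I(Ξ(λ*(1−t))) dt = −(2/λ*) ∫₀^{λ*} Λ(θ) dθ; that is, the rate-function cost ∫₀¹ I(ψ*'(t)) dt of the path ψ* equals −(2/λ*) ∫₀^{λ*} Λ(θ) dθ. -/

import Mathlib

open MeasureTheory Set Filter

/-!
The transform `Λ(θ) = θ Ξ(θ) - I(Ξ(θ))` satisfies `Λ' = Ξ`, although `Ξ` is merely
continuous: the mean value theorem for `I`, with the intermediate point written as `Ξ(s)`, gives
`Λ(r) - Λ(θ) - (r - θ) Ξ(θ) = (r - s) (Ξ(r) - Ξ(θ))` for some `s` between `θ` and `r`.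
Integrating `θ Λ'(θ) = Λ(θ) + I(Ξ(θ))` by parts over `[0, λ*]` yields
`∫ I ∘ Ξ = λ* Λ(λ*) - 2 ∫ Λ`, and the boundary term vanishes because `λ* x* = I(x*)`.
-/

open scoped Topology Interval

theorem exists_mem_uIcc_comp_sub_comp_eq_mul {f f' g : ℝ → ℝ} {a b : ℝ}
    (hg : ContinuousOn g [[a, b]]) (hf : ∀ s ∈ [[a, b]], HasDerivAt f (f' s) (g s)) :
    ∃ s ∈ [[a, b]], f (g b) - f (g a) = f' s * (g b - g a) := by
  wlog hlt : g a < g b generalizing a b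
  · rcases (not_lt.mp hlt).eq_or_lt with heq | hgt
    · exact ⟨a, left_mem_uIcc, by simp [heq]⟩
    · rw [uIcc_comm] at hg hf ⊢
      obtain ⟨s, hs, hslope⟩ := this hg hf hgt
      exact ⟨s, hs, by linarith⟩
  have hvalues : Icc (g a) (g b) ⊆ g '' [[a, b]] :=
    uIcc_of_lt hlt ▸ intermediate_value_uIcc hg
  have hderiv : ∀ x ∈ Icc (g a) (g b), HasDerivAt f (deriv f x) x := by
    intro x hx
    obtain ⟨s, hs, rfl⟩ := hvalues hx
    exact (hf s hs).differentiableAt.hasDerivAt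
  obtain ⟨c, hc, hslope⟩ := exists_hasDerivAt_eq_slope f (deriv f) hlt
    (fun x hx ↦ (hderiv x hx).continuousAt.continuousWithinAt)
    (fun x hx ↦ hderiv x (Ioo_subset_Icc_self hx))
  obtain ⟨s, hs, rfl⟩ := hvalues (Ioo_subset_Icc_self hc)
  rw [(hf s hs).deriv, eq_div_iff (sub_pos.mpr hlt).ne'] at hslope
  exact ⟨s, hs, hslope.symm⟩

/-- The Legendre transform of `I` along an inverse `Ξ` of the derivative `I'`: the supremum over `x`
of `θ x - I x` is replaced by the value at the critical point `x = Ξ θ`. That `I' (Ξ θ) = θ` is not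
part of the definition. -/
noncomputable def legendreAlong (I Ξ : ℝ → ℝ) (θ : ℝ) : ℝ :=
  θ * Ξ θ - I (Ξ θ)

section legendreAlong

variable {I Ξ : ℝ → ℝ} {a b θ : ℝ}

theorem abs_legendreAlong_sub_le (hΞ : ContinuousOn Ξ [[a, b]])
    (hI : ∀ s ∈ [[a, b]], HasDerivAt I s (Ξ s)) :
    |legendreAlong I Ξ b - legendreAlong I Ξ a - (b - a) * Ξ a| ≤ |b - a| * |Ξ b - Ξ a| := by
  obtain ⟨s, hs, hslope⟩ := exists_mem_uIcc_comp_sub_comp_eq_mul hΞ hI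
  calc |legendreAlong I Ξ b - legendreAlong I Ξ a - (b - a) * Ξ a|
      = |(b - s) * (Ξ b - Ξ a)| := by
        congr 1
        unfold legendreAlong
        linear_combination -hslope
    _ = |b - s| * |Ξ b - Ξ a| := abs_mul _ _
    _ ≤ |b - a| * |Ξ b - Ξ a| := by
        gcongr ?_ * _
        exact abs_sub_right_of_mem_uIcc hs

theorem hasDerivAt_legendreAlong (hΞ : ∀ᶠ r in 𝓝 θ, ContinuousAt Ξ r)
    (hI : ∀ᶠ r in 𝓝 θ, HasDerivAt I r (Ξ r)) :
    HasDerivAt (legendreAlong I Ξ) (Ξ θ) θ := by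
  have hbound : ∀ᶠ r in 𝓝 θ,
      ‖legendreAlong I Ξ r - legendreAlong I Ξ θ - (r - θ) • Ξ θ‖
        ≤ ‖(r - θ) * (Ξ r - Ξ θ)‖ := by
    filter_upwards [ordConnectedComponent_mem_nhds.mpr (hΞ.and hI)] with r hr
    rw [norm_mul]
    exact abs_legendreAlong_sub_le (fun s hs ↦ (hr hs).1.continuousWithinAt)
      (fun s hs ↦ (hr hs).2)
  have hΞ_tendsto : (fun r ↦ Ξ r - Ξ θ) =o[𝓝 θ] (fun _ ↦ (1 : ℝ)) :=
    (Asymptotics.isLittleO_one_iff ℝ).mpr (tendsto_sub_nhds_zero_iff.mpr hΞ.self_of_nhds)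
  rw [hasDerivAt_iff_isLittleO]
  refine (Asymptotics.IsBigO.of_bound' hbound).trans_isLittleO ?_
  simpa only [mul_one] using
    (Asymptotics.isBigO_refl (fun r ↦ r - θ) (𝓝 θ)).mul_isLittleO hΞ_tendsto

theorem hasDerivAt_legendreAlong_of_mem_Ioo (hΞ : ContinuousOn Ξ [[a, b]])
    (hI : ∀ s ∈ [[a, b]], HasDerivAt I s (Ξ s)) (hθ : θ ∈ Ioo (min a b) (max a b)) :
    HasDerivAt (legendreAlong I Ξ) (Ξ θ) θ := by
  have hnhds : ∀ᶠ r in 𝓝 θ, [[a, b]] ∈ 𝓝 r :=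
    eventually_mem_nhds_iff.mpr (Icc_mem_nhds hθ.1 hθ.2)
  exact hasDerivAt_legendreAlong (hnhds.mono fun r hr ↦ hΞ.continuousAt hr)
    (hnhds.mono fun r hr ↦ hI r (mem_of_mem_nhds hr))

theorem integral_comp_eq_legendreAlong (hΞ : ContinuousOn Ξ [[a, b]])
    (hI : ∀ s ∈ [[a, b]], HasDerivAt I s (Ξ s)) :
    ∫ θ in a..b, I (Ξ θ) = b * legendreAlong I Ξ b - a * legendreAlong I Ξ a
      - 2 * ∫ θ in a..b, legendreAlong I Ξ θ := by
  have hIΞ : ContinuousOn (fun θ ↦ I (Ξ θ)) [[a, b]] := fun θ hθ ↦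
    (hI θ hθ).continuousAt.comp_continuousWithinAt (hΞ θ hθ)
  have hidΞ : ContinuousOn (fun θ ↦ θ * Ξ θ) [[a, b]] := continuousOn_id.mul hΞ
  have hparts : ∫ θ in a..b, θ * Ξ θ = b * legendreAlong I Ξ b - a * legendreAlong I Ξ a
      - ∫ θ in a..b, 1 * legendreAlong I Ξ θ :=
    intervalIntegral.integral_mul_deriv_eq_deriv_mul_of_hasDerivAt continuousOn_id
      (hidΞ.sub hIΞ) (fun θ _ ↦ hasDerivAt_id θ)
      (fun θ hθ ↦ hasDerivAt_legendreAlong_of_mem_Ioo hΞ hI hθ)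
      intervalIntegrable_const hΞ.intervalIntegrable
  have hsplit : ∫ θ in a..b, legendreAlong I Ξ θ
      = (∫ θ in a..b, θ * Ξ θ) - ∫ θ in a..b, I (Ξ θ) :=
    intervalIntegral.integral_sub hidΞ.intervalIntegrable hIΞ.intervalIntegrable
  simp only [one_mul] at hparts
  linarith

end legendreAlong

theorem integral_comp_mul_one_sub {E : Type*} [NormedAddCommGroup E] [NormedSpace ℝ E]
    (f : ℝ → E) {c : ℝ} (hc : c ≠ 0) :
    ∫ t in (0 : ℝ)..1, f (c * (1 - t)) = c⁻¹ • ∫ θ in (0 : ℝ)..c, f θ := by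
  simpa [mul_sub] using intervalIntegral.integral_comp_sub_mul f hc c (a := 0) (b := 1)

theorem psi_star_cost_general {lstar : ℝ} {I Ξ Λ : ℝ → ℝ} (hl : lstar ≠ 0)
    (hΞ : ContinuousOn Ξ [[0, lstar]])
    (hI : ∀ θ ∈ [[0, lstar]], HasDerivAt I θ (Ξ θ))
    (hend : I (Ξ lstar) = lstar * Ξ lstar)
    (hΛ : ∀ θ ∈ [[0, lstar]], Λ θ = θ * Ξ θ - I (Ξ θ)) :
    ∫ t in (0 : ℝ)..1, I (Ξ (lstar * (1 - t))) = -(2 / lstar) * ∫ θ in (0 : ℝ)..lstar, Λ θ := by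
  have hboundary : legendreAlong I Ξ lstar = 0 := sub_eq_zero.mpr hend.symm
  calc ∫ t in (0 : ℝ)..1, I (Ξ (lstar * (1 - t)))
      = lstar⁻¹ * ∫ θ in (0 : ℝ)..lstar, I (Ξ θ) := integral_comp_mul_one_sub (fun θ ↦ I (Ξ θ)) hl
    _ = -(2 / lstar) * ∫ θ in (0 : ℝ)..lstar, legendreAlong I Ξ θ := by
        rw [integral_comp_eq_legendreAlong hΞ hI, hboundary]
        ring
    _ = -(2 / lstar) * ∫ θ in (0 : ℝ)..lstar, Λ θ := by
        rw [intervalIntegral.integral_congr hΛ]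
        rfl

/-- The rate-function cost of the path `ψ*`:
`∫₀¹ I(ψ*'(t)) dt = ∫₀¹ I(Ξ(λ*(1−t))) dt = −(2/λ*) ∫₀^{λ*} Λ(θ) dθ`. -/
theorem psi_star_cost
    (δ xstar lstar : ℝ) (I Ξ : ℝ → ℝ)
    (hδ : 0 < δ)
    (hconv : StrictConvexOn ℝ Set.univ I)
    (hC1 : ContDiff ℝ 1 I)
    (hImin : I (-δ) = 0)
    (hIpos : ∀ x : ℝ, x ≠ -δ → 0 < I x)
    (hderivδ : deriv I (-δ) = 0)
    (hxpos : 0 < xstar)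
    (hxmin : ∀ x : ℝ, 0 < x → I xstar / xstar ≤ I x / x)
    (hlamdef : lstar = deriv I xstar)
    (hlamalt : lstar = I xstar / xstar)
    (hlampos : 0 < lstar)
    (hΞinvL : ∀ x ∈ Set.Icc (-δ) xstar, Ξ (deriv I x) = x)
    (hΞinvR : ∀ r ∈ Set.Icc (0:ℝ) lstar, deriv I (Ξ r) = r)
    (hΞmaps : ∀ r ∈ Set.Icc (0:ℝ) lstar, Ξ r ∈ Set.Icc (-δ) xstar)
    (hΞcont : ContinuousOn Ξ (Set.Icc 0 lstar))
    (hΞmono : StrictMonoOn Ξ (Set.Icc 0 lstar))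
    (hΞzero : Ξ 0 = -δ)
    (hΞlstar : Ξ lstar = xstar)
    (Λ : ℝ → ℝ)
    (hΛ : ∀ θ ∈ Set.Icc (0:ℝ) lstar, Λ θ = θ * Ξ θ - I (Ξ θ)) :
    (∫ t in (0:ℝ)..1, I (Ξ (lstar * (1 - t)))) = -(2 / lstar) * ∫ θ in (0:ℝ)..lstar, Λ θ := by
  rw [← uIcc_of_le hlampos.le] at hΞinvR hΞcont hΛ
  refine psi_star_cost_general hlampos.ne' hΞcont (fun θ hθ ↦ ?_) ?_ hΛ
  · simpa only [hΞinvR θ hθ] using (hC1.differentiable one_ne_zero (Ξ θ)).hasDerivAt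
  · rw [hΞlstar, hlamalt, div_mul_cancel₀ _ hxpos.ne']
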